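/- Let δ ∈ (0,1) and σ ≥ 2 + δ. Then there exists a constant C > 0 such that for every real M ≥ 1 and every t > 0: ∫₀ᵗ e^{−(s^{−δ} − t^{−δ}) M} M ⟨s⟩^{−σ+1} ds ≤ C, where ⟨s⟩ = √(1+s²). The bound C is uniform in M and t. -/

import Mathlib

open MeasureTheory

/-!
Since `-φ'` for `φ s = s ^ (-δ)` is `δ * s ^ (-δ - 1)`, the integrand with `⟨s⟩ ^ (1 - σ)` replaced
by `-φ'` is the exact derivative of `s ↦ exp (-(φ s - φ t) * M)`. This function tends to `0` as
`s → 0⁺`, because `φ` blows up there, and equals `1` at `s = t`, so its derivative has integral `1`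
for every `M` and `t`. The weight satisfies `⟨s⟩ ^ (1 - σ) ≤ s ^ (-δ - 1) = δ⁻¹ * -φ' s` as soon as
`1 - σ ≤ -δ - 1`, which gives the uniform bound `δ⁻¹`.
-/

section

open Set Filter Topology

theorem intervalIntegrable_of_hasDerivAt_of_tendsto_of_nonneg {f f' : ℝ → ℝ} {a b fa fb : ℝ}
    (hab : a ≤ b) (hderiv : ∀ x ∈ Ioo a b, HasDerivAt f (f' x) x)
    (ha : Tendsto f (𝓝[>] a) (𝓝 fa)) (hb : Tendsto f (𝓝[<] b) (𝓝 fb))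
    (hf' : ∀ x ∈ Ioo a b, 0 ≤ f' x) : IntervalIntegrable f' volume a b := by
  have hcont : ContinuousOn f (Ioo a b) := fun x hx => (hderiv x hx).continuousAt.continuousWithinAt
  have heq : EqOn (extendFrom (Ioo a b) f) f (Ioo a b) := extendFrom_extends hcont
  refine (intervalIntegrable_iff_integrableOn_Ioc_of_le hab).2 <|
    intervalIntegral.integrableOn_deriv_of_nonneg (continuousOn_Icc_extendFrom_Ioo hcont ha hb)
      (fun x hx => ?_) hf'
  exact (hderiv x hx).congr_of_eventuallyEq (heq.eventuallyEq_of_mem (isOpen_Ioo.mem_nhds hx))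

theorem hasDerivAt_exp_neg_sub_mul {φ : ℝ → ℝ} {φ' x : ℝ} (hφ : HasDerivAt φ φ' x) (c M : ℝ) :
    HasDerivAt (fun s => Real.exp (-(φ s - c) * M)) (Real.exp (-(φ x - c) * M) * M * -φ') x := by
  refine ((hφ.sub_const c).fun_neg.mul_const M).exp.congr_deriv ?_
  ring

theorem tendsto_exp_neg_sub_mul_nhds_zero {α : Type*} {l : Filter α} {φ : α → ℝ}
    (hφ : Tendsto φ l atTop) (c : ℝ) {M : ℝ} (hM : 0 < M) :
    Tendsto (fun s => Real.exp (-(φ s - c) * M)) l (𝓝 0) := by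
  have hsub : Tendsto (fun s => φ s - c) l atTop := tendsto_atTop_add_const_right l (-c) hφ
  exact Real.tendsto_exp_atBot.comp ((tendsto_neg_atTop_atBot.comp hsub).atBot_mul_const hM)

theorem tendsto_exp_neg_sub_mul_nhds_one {α : Type*} {l : Filter α} {φ : α → ℝ} {c : ℝ}
    (hφ : Tendsto φ l (𝓝 c)) (M : ℝ) :
    Tendsto (fun s => Real.exp (-(φ s - c) * M)) l (𝓝 1) := by
  simpa using ((hφ.sub_const c).neg.mul_const M).rexp

theorem abs_mul_le_mul_mul_of_abs_le_mul {R : Type*} [CommRing R] [LinearOrder R]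
    [IsStrictOrderedRing R] {p u v K : R} (hp : 0 ≤ p) (huv : |u| ≤ K * v) :
    |p * u| ≤ K * (p * v) :=
  calc |p * u| = p * |u| := by rw [abs_mul, abs_of_nonneg hp]
    _ ≤ p * (K * v) := mul_le_mul_of_nonneg_left huv hp
    _ = K * (p * v) := mul_left_comm p K v

section DecreasingPhase

variable {φ φ' w : ℝ → ℝ} {a b c M K : ℝ}

theorem intervalIntegrable_exp_neg_sub_mul_neg_deriv (hab : a ≤ b) (hM : 0 < M)
    (hφ : ∀ x ∈ Ioo a b, HasDerivAt φ (φ' x) x) (hφ' : ∀ x ∈ Ioo a b, φ' x ≤ 0)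
    (ha : Tendsto φ (𝓝[>] a) atTop) (hb : Tendsto φ (𝓝[<] b) (𝓝 c)) :
    IntervalIntegrable (fun s => Real.exp (-(φ s - c) * M) * M * -φ' s) volume a b :=
  intervalIntegrable_of_hasDerivAt_of_tendsto_of_nonneg hab
    (fun x hx => hasDerivAt_exp_neg_sub_mul (hφ x hx) c M)
    (tendsto_exp_neg_sub_mul_nhds_zero ha c hM) (tendsto_exp_neg_sub_mul_nhds_one hb M)
    fun x hx => mul_nonneg (by positivity) (neg_nonneg.2 (hφ' x hx))

theorem integral_exp_neg_sub_mul_neg_deriv (hab : a < b) (hM : 0 < M)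
    (hφ : ∀ x ∈ Ioo a b, HasDerivAt φ (φ' x) x) (hφ' : ∀ x ∈ Ioo a b, φ' x ≤ 0)
    (ha : Tendsto φ (𝓝[>] a) atTop) (hb : Tendsto φ (𝓝[<] b) (𝓝 c)) :
    ∫ s in a..b, Real.exp (-(φ s - c) * M) * M * -φ' s = 1 := by
  rw [intervalIntegral.integral_eq_sub_of_hasDerivAt_of_tendsto hab
    (fun x hx => hasDerivAt_exp_neg_sub_mul (hφ x hx) c M)
    (intervalIntegrable_exp_neg_sub_mul_neg_deriv hab.le hM hφ hφ' ha hb)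
    (tendsto_exp_neg_sub_mul_nhds_zero ha c hM) (tendsto_exp_neg_sub_mul_nhds_one hb M), sub_zero]

theorem intervalIntegrable_exp_neg_sub_mul_weight (hab : a ≤ b) (hM : 0 < M)
    (hφ : ∀ x ∈ Ioo a b, HasDerivAt φ (φ' x) x) (hφ' : ∀ x ∈ Ioo a b, φ' x ≤ 0)
    (ha : Tendsto φ (𝓝[>] a) atTop) (hb : Tendsto φ (𝓝[<] b) (𝓝 c))
    (hw : AEStronglyMeasurable w (volume.restrict (Ioo a b)))
    (hwK : ∀ x ∈ Ioo a b, |w x| ≤ K * -φ' x) :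
    IntervalIntegrable (fun s => Real.exp (-(φ s - c) * M) * M * w s) volume a b := by
  have hmajorant :=
    (intervalIntegrable_exp_neg_sub_mul_neg_deriv hab hM hφ hφ' ha hb).const_mul K
  rw [intervalIntegrable_iff_integrableOn_Ioo_of_le hab] at hmajorant ⊢
  have hexp : ContinuousOn (fun s => Real.exp (-(φ s - c) * M) * M) (Ioo a b) := fun x hx =>
    ((hasDerivAt_exp_neg_sub_mul (hφ x hx) c M).continuousAt.mul_const M).continuousWithinAt
  refine hmajorant.mono' ((hexp.aestronglyMeasurable measurableSet_Ioo).mul hw) ?_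
  filter_upwards [ae_restrict_mem measurableSet_Ioo] with x hx
  exact abs_mul_le_mul_mul_of_abs_le_mul (by positivity) (hwK x hx)

theorem integral_exp_neg_sub_mul_weight_le (hab : a < b) (hM : 0 < M)
    (hφ : ∀ x ∈ Ioo a b, HasDerivAt φ (φ' x) x) (hφ' : ∀ x ∈ Ioo a b, φ' x ≤ 0)
    (ha : Tendsto φ (𝓝[>] a) atTop) (hb : Tendsto φ (𝓝[<] b) (𝓝 c))
    (hw : AEStronglyMeasurable w (volume.restrict (Ioo a b)))
    (hwK : ∀ x ∈ Ioo a b, |w x| ≤ K * -φ' x) :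
    ∫ s in a..b, Real.exp (-(φ s - c) * M) * M * w s ≤ K :=
  calc ∫ s in a..b, Real.exp (-(φ s - c) * M) * M * w s
      ≤ ∫ s in a..b, K * (Real.exp (-(φ s - c) * M) * M * -φ' s) :=
        intervalIntegral.integral_mono_on_of_le_Ioo hab.le
          (intervalIntegrable_exp_neg_sub_mul_weight hab.le hM hφ hφ' ha hb hw hwK)
          ((intervalIntegrable_exp_neg_sub_mul_neg_deriv hab.le hM hφ hφ' ha hb).const_mul K)
          fun x hx => (le_abs_self _).trans
            (abs_mul_le_mul_mul_of_abs_le_mul (by positivity) (hwK x hx))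
    _ = K := by
        rw [intervalIntegral.integral_const_mul,
          integral_exp_neg_sub_mul_neg_deriv hab hM hφ hφ' ha hb, mul_one]

end DecreasingPhase

theorem sqrt_one_add_sq_rpow_le_rpow {s p q : ℝ} (hs : 0 < s) (hp : p ≤ 0) (hqp : q ≤ p) :
    Real.sqrt (1 + s ^ 2) ^ q ≤ s ^ p :=
  calc Real.sqrt (1 + s ^ 2) ^ q
      ≤ Real.sqrt (1 + s ^ 2) ^ p :=
        Real.rpow_le_rpow_of_exponent_le (Real.one_le_sqrt.2 (by nlinarith)) hqp
    _ ≤ s ^ p := Real.rpow_le_rpow_of_nonpos hs (Real.le_sqrt_of_sq_le (by linarith)) hp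

theorem exponential_weight_integral_uniform_bound_general {δ σ M t : ℝ} (hδ : 0 < δ)
    (hσ : 2 + δ ≤ σ) (hM : 0 < M) (ht : 0 < t) :
    IntervalIntegrable (fun s => Real.exp (-(s ^ (-δ) - t ^ (-δ)) * M) * M *
      Real.sqrt (1 + s ^ 2) ^ (-σ + 1)) volume 0 t ∧
    ∫ s in (0 : ℝ)..t, Real.exp (-(s ^ (-δ) - t ^ (-δ)) * M) * M *
      Real.sqrt (1 + s ^ 2) ^ (-σ + 1) ≤ δ⁻¹ := by
  have hderiv : ∀ x : ℝ, 0 < x → HasDerivAt (fun s : ℝ => s ^ (-δ)) (-δ * x ^ (-δ - 1)) x :=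
    fun x hx => Real.hasDerivAt_rpow_const (Or.inl hx.ne')
  have hderiv_nonpos : ∀ x ∈ Ioo 0 t, -δ * x ^ (-δ - 1) ≤ 0 := fun x hx =>
    mul_nonpos_of_nonpos_of_nonneg (neg_nonpos.2 hδ.le) (Real.rpow_nonneg hx.1.le _)
  have hzero : Tendsto (fun s : ℝ => s ^ (-δ)) (𝓝[>] 0) atTop :=
    tendsto_rpow_neg_nhdsGT_zero (neg_neg_of_pos hδ)
  have ht_lim : Tendsto (fun s : ℝ => s ^ (-δ)) (𝓝[<] t) (𝓝 (t ^ (-δ))) :=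
    (hderiv t ht).continuousAt.tendsto.mono_left nhdsWithin_le_nhds
  have hmeas : Measurable fun s : ℝ => Real.sqrt (1 + s ^ 2) ^ (-σ + 1) := by fun_prop
  have hweight : ∀ x ∈ Ioo 0 t,
      |Real.sqrt (1 + x ^ 2) ^ (-σ + 1)| ≤ δ⁻¹ * -(-δ * x ^ (-δ - 1)) := fun x hx => by
    rw [abs_of_nonneg (by positivity), neg_mul, neg_neg, inv_mul_cancel_left₀ hδ.ne']
    exact sqrt_one_add_sq_rpow_le_rpow hx.1 (by linarith) (by linarith)
  exact ⟨intervalIntegrable_exp_neg_sub_mul_weight ht.le hM (fun x hx => hderiv x hx.1)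
      hderiv_nonpos hzero ht_lim hmeas.aestronglyMeasurable hweight,
    integral_exp_neg_sub_mul_weight_le ht hM (fun x hx => hderiv x hx.1)
      hderiv_nonpos hzero ht_lim hmeas.aestronglyMeasurable hweight⟩

end

/-- For `δ ∈ (0,1)` and `σ ≥ 2 + δ` there is `C > 0` such that for every
real `M ≥ 1` and every `t > 0`,
`∫₀ᵗ e^{−(s^{−δ} − t^{−δ}) M} M ⟨s⟩^{−σ+1} ds ≤ C`, where `⟨s⟩ = √(1+s²)`;
the bound is uniform in `M` and `t`. -/
theorem exponential_weight_integral_uniform_bound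
    (δ σ : ℝ) (hδ0 : 0 < δ) (hδ1 : δ < 1) (hσ : 2 + δ ≤ σ) :
    ∃ C : ℝ, 0 < C ∧ ∀ M t : ℝ, 1 ≤ M → 0 < t →
      (∫ s in (0:ℝ)..t,
          Real.exp (-(s ^ (-δ) - t ^ (-δ)) * M) * M * (Real.sqrt (1 + s ^ 2)) ^ (-σ + 1)) ≤ C :=
  ⟨δ⁻¹, inv_pos.2 hδ0, fun _ _ hM ht =>
    (exponential_weight_integral_uniform_bound_general hδ0 hσ (one_pos.trans_le hM) ht).2⟩
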